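/- arXiv:1811.08477 — 8 statements merged into one kernel-verified Lean document; each statement's English description precedes it below -/
import Mathlib

section
/- Let d ≥ 1, let ν be a Lévy measure on ℝ^d and b : ℝ^d → ℝ^d a function. For f ∈ C_b²(ℝ^d) define Lf(x) = ⟨∇f(x), b(x)⟩ + ∫ [f(x+u) − f(x) − ⟨∇f(x), u⟩·1_{(0,1)}(|u|)] ν(du). Let ν̃ be a family of Borel measures ν̃(x,y,·) on ℝ^d × ℝ^d, indexed by (x,y) ∈ ℝ^d × ℝ^d, such that ν̃(x,y,{(0,0)}) = 0 and ∫ min(1, |u|² + |v|²) ν̃(x,y,du,dv) < ∞ for all x,y, and define for F ∈ C_b²(ℝ^d × ℝ^d): L̃F(x,y) = ⟨∇_x F(x,y), b(x)⟩ + ⟨∇_y F(x,y), b(y)⟩ + ∫ [F(x+u, y+v) − F(x,y) − ⟨∇_x F(x,y), u⟩·1_{(0,1)}(|u|) − ⟨∇_y F(x,y), v⟩·1_{(0,1)}(|v|)] ν̃(x,y,du,dv). Then the following are equivalent: (i) for all x, y ∈ ℝ^d, all f, g ∈ C_b²(ℝ^d), L̃(f⊗1)(x,y) = Lf(x) and L̃(1⊗g)(x,y)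 = Lg(y) (where (f⊗g)(x,y) := f(x)g(y)); (ii) for all x, y ∈ ℝ^d and all Borel sets A, B ⊆ ℝ^d \ {0}: ν̃(x,y, A × ℝ^d) = ν(A) and ν̃(x,y, ℝ^d × B) = ν(B). (All integrands appearing above are automatically ν- resp. ν̃-integrable.) -/
open MeasureTheory
open scoped RealInnerProductSpace ENNReal

/-- `f ∈ C_b²`: bounded, twice continuously differentiable with bounded first and
second derivatives. -/
def IsCb2 {F : Type*} [NormedAddCommGroup F] [NormedSpace ℝ F] (f : F → ℝ) : Prop :=
  ContDiff ℝ 2 f ∧ (∃ C, ∀ x, |f x| ≤ C) ∧ (∃ C, ∀ x, ‖fderiv ℝ f x‖ ≤ C) ∧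
    (∃ C, ∀ x, ‖fderiv ℝ (fderiv ℝ f) x‖ ≤ C)

/-- The indicator function `1_{(0,1)}`. -/
noncomputable def ind01 (t : ℝ) : ℝ := Set.indicator (Set.Ioo (0 : ℝ) 1) (fun _ => (1 : ℝ)) t

/-- The Lévy-type generator
`Lf(x) = ⟨∇f(x), b(x)⟩ + ∫ [f(x+u) - f(x) - ⟨∇f(x), u⟩·1_{(0,1)}(|u|)] ν(du)`. -/
noncomputable def Lop {d : ℕ} (ν : Measure (EuclideanSpace ℝ (Fin d)))
    (b : EuclideanSpace ℝ (Fin d) → EuclideanSpace ℝ (Fin d))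
    (f : EuclideanSpace ℝ (Fin d) → ℝ) (x : EuclideanSpace ℝ (Fin d)) : ℝ :=
  ⟪gradient f x, b x⟫ + ∫ u, (f (x + u) - f x - ⟪gradient f x, u⟫ * ind01 ‖u‖) ∂ν

/-- The candidate coupling operator
`L̃F(x,y) = ⟨∇ₓF(x,y), b(x)⟩ + ⟨∇_yF(x,y), b(y)⟩ + ∫ [F(x+u,y+v) - F(x,y)
  - ⟨∇ₓF(x,y), u⟩·1_{(0,1)}(|u|) - ⟨∇_yF(x,y), v⟩·1_{(0,1)}(|v|)] ν̃(x,y,du,dv)`. -/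
noncomputable def Lcouple {d : ℕ}
    (b : EuclideanSpace ℝ (Fin d) → EuclideanSpace ℝ (Fin d))
    (ν' : EuclideanSpace ℝ (Fin d) → EuclideanSpace ℝ (Fin d) →
      Measure (EuclideanSpace ℝ (Fin d) × EuclideanSpace ℝ (Fin d)))
    (F : EuclideanSpace ℝ (Fin d) × EuclideanSpace ℝ (Fin d) → ℝ)
    (x y : EuclideanSpace ℝ (Fin d)) : ℝ :=
  ⟪gradient (fun x' => F (x', y)) x, b x⟫ + ⟪gradient (fun y' => F (x, y')) y, b y⟫ +
    ∫ p, (F (x + p.1, y + p.2) - F (x, y)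
      - ⟪gradient (fun x' => F (x', y)) x, p.1⟫ * ind01 ‖p.1‖
      - ⟪gradient (fun y' => F (x, y')) y, p.2⟫ * ind01 ‖p.2‖) ∂(ν' x y)

lemma bound_fderiv_of_compactSupport {F G : Type*} [NormedAddCommGroup F] [NormedSpace ℝ F]
    [NormedAddCommGroup G] [NormedSpace ℝ G] {g : F → G}
    (hg : ContDiff ℝ 1 g) (hc : HasCompactSupport g) : ∃ C, ∀ x, ‖fderiv ℝ g x‖ ≤ C :=
  (hc.fderiv ℝ).exists_bound_of_continuous (hg.continuous_fderiv (by norm_num))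

lemma isCb2_of_compactSupport {F : Type*} [NormedAddCommGroup F] [NormedSpace ℝ F] {f : F → ℝ}
    (hf : ContDiff ℝ 2 f) (hc : HasCompactSupport f) : IsCb2 f := by
  have h1 : ContDiff ℝ 1 (fderiv ℝ f) := hf.fderiv_right (by norm_num)
  refine ⟨hf, ?_, ?_, ?_⟩
  · simpa using hc.exists_bound_of_continuous hf.continuous
  · exact (hc.fderiv ℝ).exists_bound_of_continuous h1.continuous
  · exact bound_fderiv_of_compactSupport h1 (hc.fderiv ℝ)

/-- The open annuli exhausting the complement of the origin. -/
def annul (E : Type*) [NormedAddCommGroup E] (n : ℕ) : Set E :=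
  {z | 1 / ((n : ℝ) + 1) < ‖z‖ ∧ ‖z‖ < (n : ℝ) + 1}

lemma isOpen_annul {E : Type*} [NormedAddCommGroup E] (n : ℕ) : IsOpen (annul E n) :=
  (isOpen_lt continuous_const continuous_norm).inter (isOpen_lt continuous_norm continuous_const)

lemma iUnion_annul {E : Type*} [NormedAddCommGroup E] : (⋃ n, annul E n) = {(0 : E)}ᶜ := by
  ext z
  simp only [Set.mem_iUnion, Set.mem_compl_iff, Set.mem_singleton_iff]
  constructor
  · rintro ⟨n, h1, -⟩ rfl
    rw [norm_zero] at h1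
    have : (0 : ℝ) < 1 / ((n : ℝ) + 1) := by positivity
    linarith
  · intro hz
    have hz' : 0 < ‖z‖ := norm_pos_iff.2 hz
    obtain ⟨n, hn⟩ := exists_nat_one_div_lt hz'
    obtain ⟨m, hm⟩ := exists_nat_gt ‖z‖
    refine ⟨max n m, lt_of_le_of_lt ?_ hn, lt_of_lt_of_le hm ?_⟩
    · have : (n : ℝ) ≤ (max n m : ℕ) := by exact_mod_cast le_max_left n m
      gcongr
    · have : (m : ℝ) ≤ (max n m : ℕ) := by exact_mod_cast le_max_right n m
      linarith

lemma annul_finite {E : Type*} [NormedAddCommGroup E] [MeasurableSpace E] [BorelSpace E]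
    (μ : Measure E) (h : ∫⁻ z, ENNReal.ofReal (min 1 (‖z‖ ^ 2)) ∂μ < ∞) (n : ℕ) :
    μ (annul E n) < ∞ := by
  set c : ℝ := min 1 ((1 / ((n : ℝ) + 1)) ^ 2) with hc
  have hcpos : 0 < c := by rw [hc]; positivity
  have hm : AEMeasurable (fun z : E => ENNReal.ofReal (min 1 (‖z‖ ^ 2))) μ := by
    fun_prop
  have hle := meas_ge_le_lintegral_div hm (ε := ENNReal.ofReal c) (by simpa using hcpos)
    ENNReal.ofReal_ne_top
  refine lt_of_le_of_lt (measure_mono ?_) (lt_of_le_of_lt hle ?_)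
  · intro z hz
    apply ENNReal.ofReal_le_ofReal
    have h1 : 1 / ((n : ℝ) + 1) ≤ ‖z‖ := hz.1.le
    rw [hc]
    gcongr
  · exact ENNReal.div_lt_top h.ne (by simpa using hcpos)

lemma measure_eq_of_smooth {E : Type*} [NormedAddCommGroup E] [NormedSpace ℝ E]
    [FiniteDimensional ℝ E] [MeasurableSpace E] [BorelSpace E] (μ₁ μ₂ : Measure E)
    (h : ∀ φ : E → ℝ, ContDiff ℝ 2 φ → HasCompactSupport φ → (0 : E) ∉ tsupport φ →
      ∫ z, φ z ∂μ₁ = ∫ z, φ z ∂μ₂)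
    (h1 : ∀ n, μ₁ (annul E n) < ∞) (h2 : ∀ n, μ₂ (annul E n) < ∞) :
    μ₁.restrict {0}ᶜ = μ₂.restrict {0}ᶜ := by
  have key : ∀ n, ∀ U : Set E, IsOpen U → U ⊆ annul E n → μ₁ U = μ₂ U := by
    intro n U hU hUn
    obtain ⟨f, hfs, hfd, hfr⟩ := hU.exists_contDiff_support_eq (n := 2)
    have hf0 : ∀ z, 0 ≤ f z := fun z => (hfr ⟨z, rfl⟩).1
    have hf1 : ∀ z, f z ≤ 1 := fun z => (hfr ⟨z, rfl⟩).2
    have hfU : ∀ z, z ∉ U → f z = 0 := by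
      intro z hz; rw [← hfs] at hz; simpa using hz
    have hfU' : ∀ z, z ∈ U → f z ≠ 0 := by
      intro z hz; rw [← hfs] at hz; simpa using hz
    let F : ℕ → E → ℝ := fun k z => 1 - (1 - f z) ^ k
    have hFU : ∀ k z, z ∉ U → F k z = 0 := by
      intro k z hz; simp [F, hfU z hz]
    have hFs : ∀ k, tsupport (F k) ⊆ {z | 1 / ((n : ℝ) + 1) ≤ ‖z‖ ∧ ‖z‖ ≤ (n : ℝ) + 1} := by
      intro k
      apply closure_minimal
      · intro z hz
        have : z ∈ U := by
          by_contra hzU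
          exact hz (hFU k z hzU)
        exact ⟨(hUn this).1.le, (hUn this).2.le⟩
      · exact (isClosed_le continuous_const continuous_norm).inter
          (isClosed_le continuous_norm continuous_const)
    have hFd : ∀ k, ContDiff ℝ 2 (F k) := fun k =>
      contDiff_const.sub ((contDiff_const.sub hfd).pow k)
    have hFc : ∀ k, HasCompactSupport (F k) := by
      intro k
      refine HasCompactSupport.of_support_subset_isCompact
        (isCompact_closedBall (0 : E) ((n : ℝ) + 1)) ?_
      intro z hz
      have := hFs k (subset_tsupport _ hz)
      simpa using this.2
    have hF0 : ∀ k, (0 : E) ∉ tsupport (F k) := by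
      intro k hk
      have := (hFs k hk).1
      rw [norm_zero] at this
      have : (0 : ℝ) < 1 / ((n : ℝ) + 1) := by positivity
      linarith
    have lim : ∀ μ : Measure E, μ U < ∞ →
        Filter.Tendsto (fun k => ∫ z, F k z ∂μ) Filter.atTop (nhds (μ.real U)) := by
      intro μ hμ
      have e : μ.real U = ∫ z, U.indicator (fun _ => (1 : ℝ)) z ∂μ := by
        rw [integral_indicator hU.measurableSet]; simp
      rw [e]
      refine tendsto_integral_of_dominated_convergence (U.indicator (fun _ => (1 : ℝ)))
        (fun k => (hFd k).continuous.aestronglyMeasurable) ?_ ?_ ?_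
      · rw [integrable_indicator_iff hU.measurableSet]
        exact integrableOn_const hμ.ne
      · intro k
        refine Filter.Eventually.of_forall fun z => ?_
        by_cases hz : z ∈ U
        · rw [Set.indicator_of_mem hz, Real.norm_eq_abs, abs_le]
          have a1 : (0 : ℝ) ≤ (1 - f z) ^ k := pow_nonneg (by linarith [hf1 z]) k
          have a2 : (1 - f z) ^ k ≤ 1 := pow_le_one₀ (by linarith [hf1 z]) (by linarith [hf0 z])
          constructor <;> simp only [F] <;> linarith
        · rw [Set.indicator_of_notMem hz, hFU k z hz, norm_zero]
      · refine Filter.Eventually.of_forall fun z => ?_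
        by_cases hz : z ∈ U
        · rw [Set.indicator_of_mem hz]
          have hpos : 0 < f z := lt_of_le_of_ne (hf0 z) (hfU' z hz).symm
          have := tendsto_pow_atTop_nhds_zero_of_lt_one (r := 1 - f z) (by linarith [hf1 z])
            (by linarith)
          simpa [F] using this.const_sub 1
        · simp [Set.indicator_of_notMem hz, hFU _ z hz]
    have u1 : μ₁ U < ∞ := (measure_mono hUn).trans_lt (h1 n)
    have u2 : μ₂ U < ∞ := (measure_mono hUn).trans_lt (h2 n)
    have l1 := lim μ₁ u1
    have l2 := lim μ₂ u2
    have hEq : (fun k => ∫ z, F k z ∂μ₁) = fun k => ∫ z, F k z ∂μ₂ :=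
      funext fun k => h (F k) (hFd k) (hFc k) (hF0 k)
    rw [hEq] at l1
    exact (measureReal_eq_measureReal_iff u1.ne u2.ne).1 (tendsto_nhds_unique l1 l2)
  rw [← iUnion_annul, Measure.restrict_iUnion_congr]
  intro n
  have : IsFiniteMeasure (μ₁.restrict (annul E n)) := ⟨by simpa using h1 n⟩
  refine ext_of_generate_finite {s | IsOpen s} (BorelSpace.measurable_eq) isPiSystem_isOpen ?_ ?_
  · intro s hs
    have hs' : IsOpen s := hs
    rw [Measure.restrict_apply hs'.measurableSet, Measure.restrict_apply hs'.measurableSet]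
    exact key n _ (hs'.inter (isOpen_annul n)) Set.inter_subset_right
  · simpa using key n _ (isOpen_annul n) subset_rfl

section
variable {d : ℕ}

/-- The integrand of the generator. -/
noncomputable def Jint (f : EuclideanSpace ℝ (Fin d) → ℝ) (x u : EuclideanSpace ℝ (Fin d)) : ℝ :=
  f (x + u) - f x - ⟪gradient f x, u⟫ * ind01 ‖u‖

lemma measurable_Jint {f : EuclideanSpace ℝ (Fin d) → ℝ} (hf : Continuous f)
    (x : EuclideanSpace ℝ (Fin d)) : Measurable (Jint f x) := by
  have h1 : Measurable ind01 := by
    unfold ind01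
    exact measurable_const.indicator measurableSet_Ioo
  have h2 : Measurable fun u => f (x + u) := by fun_prop
  have h3 : Measurable fun u : EuclideanSpace ℝ (Fin d) => ⟪gradient f x, u⟫ := by fun_prop
  have h4 : Measurable fun u : EuclideanSpace ℝ (Fin d) => ind01 ‖u‖ := h1.comp measurable_norm
  exact (h2.sub measurable_const).sub (h3.mul h4)

lemma Jint_zero (f : EuclideanSpace ℝ (Fin d) → ℝ) (x : EuclideanSpace ℝ (Fin d)) :
    Jint f x 0 = 0 := by simp [Jint]

lemma integral_Jint_restrict (f : EuclideanSpace ℝ (Fin d) → ℝ) (x : EuclideanSpace ℝ (Fin d))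
    (μ : Measure (EuclideanSpace ℝ (Fin d))) :
    ∫ u, Jint f x u ∂(μ.restrict {0}ᶜ) = ∫ u, Jint f x u ∂μ := by
  apply setIntegral_eq_integral_of_forall_compl_eq_zero
  intro u hu
  have : u = 0 := by simpa using hu
  rw [this, Jint_zero]

lemma Lcouple_fst {b : EuclideanSpace ℝ (Fin d) → EuclideanSpace ℝ (Fin d)}
    {ν' : EuclideanSpace ℝ (Fin d) → EuclideanSpace ℝ (Fin d) →
      Measure (EuclideanSpace ℝ (Fin d) × EuclideanSpace ℝ (Fin d))}
    {f : EuclideanSpace ℝ (Fin d) → ℝ} (hf : Continuous f) (x y : EuclideanSpace ℝ (Fin d)) :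
    Lcouple b ν' (fun p => f p.1) x y
      = ⟪gradient f x, b x⟫ + ∫ u, Jint f x u ∂((ν' x y).map Prod.fst) := by
  rw [integral_map measurable_fst.aemeasurable (measurable_Jint hf x).aestronglyMeasurable]
  simp [Lcouple, Jint, gradient_fun_const]

lemma Lcouple_snd {b : EuclideanSpace ℝ (Fin d) → EuclideanSpace ℝ (Fin d)}
    {ν' : EuclideanSpace ℝ (Fin d) → EuclideanSpace ℝ (Fin d) →
      Measure (EuclideanSpace ℝ (Fin d) × EuclideanSpace ℝ (Fin d))}
    {f : EuclideanSpace ℝ (Fin d) → ℝ} (hf : Continuous f) (x y : EuclideanSpace ℝ (Fin d)) :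
    Lcouple b ν' (fun p => f p.2) x y
      = ⟪gradient f y, b y⟫ + ∫ u, Jint f y u ∂((ν' x y).map Prod.snd) := by
  rw [integral_map measurable_snd.aemeasurable (measurable_Jint hf y).aestronglyMeasurable]
  simp [Lcouple, Jint, gradient_fun_const]

lemma Lop_eq (ν : Measure (EuclideanSpace ℝ (Fin d)))
    (b : EuclideanSpace ℝ (Fin d) → EuclideanSpace ℝ (Fin d))
    (f : EuclideanSpace ℝ (Fin d) → ℝ) (x : EuclideanSpace ℝ (Fin d)) :
    Lop ν b f x = ⟪gradient f x, b x⟫ + ∫ u, Jint f x u ∂ν := rfl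

lemma restrict_eq_of_gen (μ ν : Measure (EuclideanSpace ℝ (Fin d)))
    (x : EuclideanSpace ℝ (Fin d))
    (hμ : ∫⁻ z, ENNReal.ofReal (min 1 (‖z‖ ^ 2)) ∂μ < ∞)
    (hν : ∫⁻ z, ENNReal.ofReal (min 1 (‖z‖ ^ 2)) ∂ν < ∞)
    (h : ∀ f : EuclideanSpace ℝ (Fin d) → ℝ, IsCb2 f →
      ∫ u, Jint f x u ∂μ = ∫ u, Jint f x u ∂ν) :
    μ.restrict {0}ᶜ = ν.restrict {0}ᶜ := by
  refine measure_eq_of_smooth μ ν ?_ (annul_finite μ hμ) (annul_finite ν hν)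
  intro φ hφ hc h0
  have hcb : IsCb2 (fun z => φ (z - x)) :=
    isCb2_of_compactSupport (hφ.comp (contDiff_id.sub contDiff_const))
      (hc.comp_homeomorph (Homeomorph.subRight x))
  have hev : φ =ᶠ[nhds 0] 0 := notMem_tsupport_iff_eventuallyEq.1 h0
  have hev' : (fun z => φ (z - x)) =ᶠ[nhds x] fun _ => (0 : ℝ) := by
    have ht : Filter.Tendsto (fun z : EuclideanSpace ℝ (Fin d) => z - x) (nhds x) (nhds 0) := by
      have : Continuous fun z : EuclideanSpace ℝ (Fin d) => z - x := by fun_prop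
      simpa using this.tendsto x
    exact ht.eventually hev
  have hg : gradient (fun z => φ (z - x)) x = 0 := by
    rw [hev'.gradient_eq, gradient_fun_const]
  have hJ : Jint (fun z => φ (z - x)) x = φ := by
    funext u
    have : φ 0 = 0 := hev.self_of_nhds
    simp [Jint, hg, this]
  have := h _ hcb
  rwa [hJ] at this

lemma apply_eq_of_restrict {E : Type*} [Zero E] [MeasurableSpace E] {μ ν : Measure E}
    (h : μ.restrict {0}ᶜ = ν.restrict {0}ᶜ) {A : Set E} (hA : MeasurableSet A)
    (h0 : (0 : E) ∉ A) : μ A = ν A := by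
  have hs : A ∩ {0}ᶜ = A := Set.inter_eq_left.2 (fun z hz hz0 => h0 (by
    rw [Set.mem_singleton_iff] at hz0; rwa [← hz0]))
  have := congrArg (fun m => m A) h
  simpa [Measure.restrict_apply hA, hs] using this

lemma restrict_eq_of_apply {E : Type*} [Zero E] [MeasurableSpace E] [MeasurableSingletonClass E]
    {μ ν : Measure E}
    (h : ∀ A : Set E, MeasurableSet A → (0 : E) ∉ A → μ A = ν A) :
    μ.restrict {0}ᶜ = ν.restrict {0}ᶜ := by
  ext A hA
  rw [Measure.restrict_apply hA, Measure.restrict_apply hA]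
  exact h _ (hA.inter (measurableSet_singleton 0).compl) (by simp)

end

/-- `L̃` is a coupling operator with marginal `L` (i.e. `L̃(f⊗1)(x,y) = Lf(x)` and
`L̃(1⊗g)(x,y) = Lg(y)` for all `f, g ∈ C_b²`) if and only if the kernel `ν̃(x,y,·)`
has both marginals equal to `ν` on Borel sets avoiding the origin. -/
theorem stmt_0 (d : ℕ) (hd : 1 ≤ d) (ν : Measure (EuclideanSpace ℝ (Fin d)))
    [SigmaFinite ν] (hν0 : ν {0} = 0)
    (hν2 : ∫⁻ z, ENNReal.ofReal (min 1 (‖z‖ ^ 2)) ∂ν < ∞)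
    (b : EuclideanSpace ℝ (Fin d) → EuclideanSpace ℝ (Fin d))
    (ν' : EuclideanSpace ℝ (Fin d) → EuclideanSpace ℝ (Fin d) →
      Measure (EuclideanSpace ℝ (Fin d) × EuclideanSpace ℝ (Fin d)))
    (hν'0 : ∀ x y, ν' x y {((0 : EuclideanSpace ℝ (Fin d)), (0 : EuclideanSpace ℝ (Fin d)))} = 0)
    (hν'2 : ∀ x y, ∫⁻ p, ENNReal.ofReal (min 1 (‖p.1‖ ^ 2 + ‖p.2‖ ^ 2)) ∂(ν' x y) < ∞) :
    ((∀ x y : EuclideanSpace ℝ (Fin d), ∀ f : EuclideanSpace ℝ (Fin d) → ℝ, IsCb2 f →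
        Lcouple b ν' (fun p => f p.1) x y = Lop ν b f x) ∧
      (∀ x y : EuclideanSpace ℝ (Fin d), ∀ g : EuclideanSpace ℝ (Fin d) → ℝ, IsCb2 g →
        Lcouple b ν' (fun p => g p.2) x y = Lop ν b g y))
    ↔ (∀ x y : EuclideanSpace ℝ (Fin d), ∀ A B : Set (EuclideanSpace ℝ (Fin d)),
        MeasurableSet A → MeasurableSet B →
        (0 : EuclideanSpace ℝ (Fin d)) ∉ A → (0 : EuclideanSpace ℝ (Fin d)) ∉ B →
        ν' x y (A ×ˢ Set.univ) = ν A ∧ ν' x y (Set.univ ×ˢ B) = ν B) := by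
  have hm1 : ∀ x y, ∫⁻ z, ENNReal.ofReal (min 1 (‖z‖ ^ 2)) ∂((ν' x y).map Prod.fst) < ∞ := by
    intro x y
    rw [lintegral_map (by fun_prop) measurable_fst]
    refine lt_of_le_of_lt (lintegral_mono fun p => ?_) (hν'2 x y)
    apply ENNReal.ofReal_le_ofReal
    exact min_le_min le_rfl (by nlinarith [sq_nonneg ‖p.2‖])
  have hm2 : ∀ x y, ∫⁻ z, ENNReal.ofReal (min 1 (‖z‖ ^ 2)) ∂((ν' x y).map Prod.snd) < ∞ := by
    intro x y
    rw [lintegral_map (by fun_prop) measurable_snd]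
    refine lt_of_le_of_lt (lintegral_mono fun p => ?_) (hν'2 x y)
    apply ENNReal.ofReal_le_ofReal
    exact min_le_min le_rfl (by nlinarith [sq_nonneg ‖p.1‖])
  have ap1 : ∀ x y, ∀ A : Set (EuclideanSpace ℝ (Fin d)), MeasurableSet A →
      (ν' x y).map Prod.fst A = ν' x y (A ×ˢ Set.univ) := by
    intro x y A hA
    rw [Measure.map_apply measurable_fst hA, Set.prod_univ]
  have ap2 : ∀ x y, ∀ A : Set (EuclideanSpace ℝ (Fin d)), MeasurableSet A →
      (ν' x y).map Prod.snd A = ν' x y (Set.univ ×ˢ A) := by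
    intro x y A hA
    rw [Measure.map_apply measurable_snd hA, Set.univ_prod]
  constructor
  · rintro ⟨hf, hg⟩ x y A B hA hB hA0 hB0
    rw [← ap1 x y A hA, ← ap2 x y B hB]
    constructor
    · refine apply_eq_of_restrict (restrict_eq_of_gen _ ν x (hm1 x y) hν2 ?_) hA hA0
      intro f hcb
      have := hf x y f hcb
      rw [Lcouple_fst hcb.1.continuous, Lop_eq] at this
      exact add_left_cancel this
    · refine apply_eq_of_restrict (restrict_eq_of_gen _ ν y (hm2 x y) hν2 ?_) hB hB0
      intro f hcb
      have := hg x y f hcb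
      rw [Lcouple_snd hcb.1.continuous, Lop_eq] at this
      exact add_left_cancel this
  · intro h
    constructor
    · intro x y f hcb
      rw [Lcouple_fst hcb.1.continuous, Lop_eq, ← integral_Jint_restrict,
        ← integral_Jint_restrict f x ν]
      rw [restrict_eq_of_apply (μ := (ν' x y).map Prod.fst) (ν := ν) fun A hA h0 => by
        rw [ap1 x y A hA]; exact (h x y A A hA hA h0 h0).1]
    · intro x y f hcb
      rw [Lcouple_snd hcb.1.continuous, Lop_eq, ← integral_Jint_restrict,
        ← integral_Jint_restrict f y ν]
      rw [restrict_eq_of_apply (μ := (ν' x y).map Prod.snd) (ν := ν) fun A hA h0 => by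
        rw [ap2 x y A hA]; exact (h x y A A hA hA h0 h0).2]
end

section
/- Let d ≥ 1, let ν be a Lévy measure on ℝ^d, let ι be a countable index set, let (ν_i)_{i∈ι} be Borel measures on ℝ^d with ∑_{i∈ι} ν_i ≤ ν, and let Ψ_i : ℝ^d → ℝ^d be bijections such that Ψ_i and Ψ_i⁻¹ are Borel measurable. Set μ_{ν_i,Ψ_i} := ν_i ⊓ (ν_i∘Ψ_i). Then ∑_{i∈ι} μ_{ν_i,Ψ_i} ≤ ν, and if moreover ∑_{i∈ι} μ_{ν_i,Ψ_i} = ∑_{i∈ι} μ_{ν_i,Ψ_i⁻¹}, then the Borel measure on ℝ^d × ℝ^d defined by ν̃ := ∑_{i∈ι} (μ_{ν_i,Ψ_i}).map(u ↦ (u, Ψ_i(u))) + (ν − ∑_{i∈ι} μ_{ν_i,Ψ_i}).map(u ↦ (u,u)) has both marginals equal to ν, i.e. ν̃(A × ℝ^d) = ν(A) and ν̃(ℝ^d × B) = ν(B) for all Borel sets A, B ⊆ ℝ^d. -/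
open MeasureTheory
open scoped ENNReal

theorem aux_sub_add_cancel {α : Type*} [MeasurableSpace α] (ν μ : Measure α) [SigmaFinite ν]
    (h : μ ≤ ν) : ν - μ + μ = ν := by
  refine (Measure.ext_iff_of_iUnion_eq_univ (iUnion_spanningSets ν)).2 fun n => ?_
  have hS := measurableSet_spanningSets ν n
  have hle : μ.restrict (spanningSets ν n) ≤ ν.restrict (spanningSets ν n) :=
    Measure.restrict_mono le_rfl h
  have : IsFiniteMeasure (μ.restrict (spanningSets ν n)) :=
    ⟨by
      rw [Measure.restrict_apply_univ]
      exact lt_of_le_of_lt (h _) (measure_spanningSets_lt_top ν n)⟩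
  rw [Measure.restrict_add, Measure.restrict_sub_eq_restrict_sub_restrict hS,
    Measure.sub_add_cancel_of_le hle]

theorem aux_map_inf {α : Type*} [MeasurableSpace α] (ν : Measure α) (f g : α → α)
    (hf : Measurable f) (hg : Measurable g)
    (hl : Function.LeftInverse g f) (hr : Function.RightInverse g f) :
    (ν ⊓ ν.map g).map f = ν ⊓ ν.map f := by
  have hfg : ∀ m : Measure α, (m.map g).map f = m := fun m => by
    rw [Measure.map_map hf hg, hr.comp_eq_id, Measure.map_id]
  have hgf : ∀ m : Measure α, (m.map f).map g = m := fun m => by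
    rw [Measure.map_map hg hf, hl.comp_eq_id, Measure.map_id]
  apply le_antisymm
  · refine le_inf ?_ (Measure.map_mono inf_le_left hf)
    calc _ ≤ (ν.map g).map f := Measure.map_mono inf_le_right hf
      _ = ν := hfg ν
  · rw [← hfg (ν ⊓ ν.map f)]
    refine Measure.map_mono (le_inf ?_ (Measure.map_mono inf_le_left hg)) hf
    calc _ ≤ (ν.map f).map g := Measure.map_mono inf_le_right hg
      _ = ν := hgf ν

/-- For a Lévy measure `ν`, a countable family of measures `ν_i` with `∑ ν_i ≤ ν` and
bi-measurable bijections `Ψ_i`, setting `μ_i := ν_i ⊓ (ν_i ∘ Ψ_i)` (with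
`ν_i ∘ Ψ_i = (ν_i).map Ψ_i⁻¹`), one has `∑ μ_i ≤ ν`; and if moreover
`∑ (ν_i ⊓ ν_i∘Ψ_i) = ∑ (ν_i ⊓ ν_i∘Ψ_i⁻¹)`, then the measure
`ν̃ = ∑ μ_i.map (u ↦ (u, Ψ_i u)) + (ν - ∑ μ_i).map (u ↦ (u,u))` on `ℝ^d × ℝ^d`
has both marginals equal to `ν`. -/
theorem stmt_1 {d : ℕ} (hd : 1 ≤ d) (ν : Measure (EuclideanSpace ℝ (Fin d)))
    [SigmaFinite ν] (hν0 : ν {0} = 0)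
    (hν2 : ∫⁻ z, ENNReal.ofReal (min 1 (‖z‖ ^ 2)) ∂ν < ∞)
    {ι : Type*} [Countable ι]
    (νi : ι → Measure (EuclideanSpace ℝ (Fin d)))
    (Ψ Ψinv : ι → EuclideanSpace ℝ (Fin d) → EuclideanSpace ℝ (Fin d))
    (hΨm : ∀ i, Measurable (Ψ i)) (hΨim : ∀ i, Measurable (Ψinv i))
    (hleft : ∀ i, Function.LeftInverse (Ψinv i) (Ψ i))
    (hright : ∀ i, Function.RightInverse (Ψinv i) (Ψ i))
    (hsum : Measure.sum νi ≤ ν) :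
    Measure.sum (fun i => νi i ⊓ (νi i).map (Ψinv i)) ≤ ν ∧
    (Measure.sum (fun i => νi i ⊓ (νi i).map (Ψinv i))
        = Measure.sum (fun i => νi i ⊓ (νi i).map (Ψ i)) →
      ∀ A B : Set (EuclideanSpace ℝ (Fin d)), MeasurableSet A → MeasurableSet B →
        (Measure.sum (fun i => ((νi i ⊓ (νi i).map (Ψinv i)).map (fun u => (u, Ψ i u))))
            + (ν - Measure.sum (fun i => νi i ⊓ (νi i).map (Ψinv i))).map (fun u => (u, u)))
          (A ×ˢ Set.univ) = ν A ∧
        (Measure.sum (fun i => ((νi i ⊓ (νi i).map (Ψinv i)).map (fun u => (u, Ψ i u))))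
            + (ν - Measure.sum (fun i => νi i ⊓ (νi i).map (Ψinv i))).map (fun u => (u, u)))
          (Set.univ ×ˢ B) = ν B) := by
  have hle : Measure.sum (fun i => νi i ⊓ (νi i).map (Ψinv i)) ≤ ν := by
    refine le_trans ?_ hsum
    refine Measure.le_iff.2 fun s hs => ?_
    rw [Measure.sum_apply _ hs, Measure.sum_apply _ hs]
    exact ENNReal.tsum_le_tsum fun i => (inf_le_left : νi i ⊓ (νi i).map (Ψinv i) ≤ νi i) s
  refine ⟨hle, fun heq A B hA hB => ?_⟩
  have hcancel := aux_sub_add_cancel ν _ hle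
  have hdiag : Measurable (fun u : EuclideanSpace ℝ (Fin d) => (u, u)) :=
    measurable_id.prodMk measurable_id
  have hgr : ∀ i, Measurable (fun u : EuclideanSpace ℝ (Fin d) => (u, Ψ i u)) :=
    fun i => measurable_id.prodMk (hΨm i)
  constructor
  · have hm : MeasurableSet (A ×ˢ (Set.univ : Set (EuclideanSpace ℝ (Fin d)))) :=
      hA.prod MeasurableSet.univ
    have h1 : ∀ i, ((νi i ⊓ (νi i).map (Ψinv i)).map (fun u => (u, Ψ i u)))
        (A ×ˢ Set.univ) = (νi i ⊓ (νi i).map (Ψinv i)) A := fun i => by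
      rw [Measure.map_apply (hgr i) hm]
      congr 1
      ext u
      simp
    have h2 : (fun u : EuclideanSpace ℝ (Fin d) => (u, u)) ⁻¹' (A ×ˢ Set.univ) = A := by
      ext u
      simp
    rw [Measure.add_apply, Measure.sum_apply _ hm, Measure.map_apply hdiag hm, h2,
      tsum_congr h1, ← Measure.sum_apply _ hA, add_comm, ← Measure.add_apply, hcancel]
  · have hm : MeasurableSet ((Set.univ : Set (EuclideanSpace ℝ (Fin d))) ×ˢ B) :=
      MeasurableSet.univ.prod hB
    have h1 : ∀ i, ((νi i ⊓ (νi i).map (Ψinv i)).map (fun u => (u, Ψ i u)))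
        (Set.univ ×ˢ B) = (νi i ⊓ (νi i).map (Ψ i)) B := fun i => by
      rw [← aux_map_inf (νi i) (Ψ i) (Ψinv i) (hΨm i) (hΨim i) (hleft i) (hright i),
        Measure.map_apply (hgr i) hm, Measure.map_apply (hΨm i) hB]
      congr 1
      ext u
      simp
    have h2 : (fun u : EuclideanSpace ℝ (Fin d) => (u, u)) ⁻¹' (Set.univ ×ˢ B) = B := by
      ext u
      simp
    rw [Measure.add_apply, Measure.sum_apply _ hm, Measure.map_apply hdiag hm, h2,
      tsum_congr h1, ← Measure.sum_apply _ hB, ← heq, add_comm, ← Measure.add_apply, hcancel]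
end

section
/- (Lemma 3.2 of the paper.) Let d ≥ 1, let ν be a rotationally symmetric Lévy measure on ℝ^d, let b : ℝ^d → ℝ^d be any function, and let f : ℝ → ℝ be continuous on [0,2], twice continuously differentiable on (0,2], with f(0) = 0, f' ≥ 0 on (0,2], f'' ≤ 0 on (0,2], and f'' nondecreasing on (0,2]. Let x, y ∈ ℝ^d with 0 < |x−y| ≤ 1, and write r := |x−y|. Then the function z ↦ f(|x−y+z−R_{x,y}(z)|) − f(r) − f'(r)·(⟨x−y,z⟩/r)·1_{(0,1)}(|z|) + f'(r)·(⟨x−y,R_{x,y}(z)⟩/r)·1_{(0,1)}(|R_{x,y}(z)|) is ν-integrable on {z : |z| ≤ r/2}, the integral ∫_{|z| ≤ r/2} |z|² ν(dz) is finite, and f'(r)·⟨b(x)−b(y), x−y⟩/r + ∫_{|z| ≤ r/2} [f(|x−y+z−R_{x,y}(z)|) − f(r) − f'(r)·(⟨x−y,z⟩/r)·1_{(0,1)}(|z|) + f'(r)·(⟨x−y,R_{x,y}(z)⟩/r)·1_{(0,1)}(|R_{x,y}(z)|)] ν(dz) ≤ f'(r)·⟨b(x)−b(y), x−y⟩/r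 + (2/d)·f''(2r)·∫_{|z| ≤ r/2} |z|² ν(dz). -/
open MeasureTheory
open scoped RealInnerProductSpace ENNReal

/-- The reflection `R_{x,y}(z) = z - (2⟨x-y,z⟩/|x-y|²)(x-y)`. -/
noncomputable def reflect {d : ℕ} (x y z : EuclideanSpace ℝ (Fin d)) :
    EuclideanSpace ℝ (Fin d) :=
  z - (2 * ⟪x - y, z⟫ / ‖x - y‖ ^ 2) • (x - y)

lemma taylor_aux (f f' f'' : ℝ → ℝ) (a b r c : ℝ) (har : a < r) (hrb : r < b)
    (hf : ContinuousOn f (Set.Icc a b))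
    (h1 : ∀ s ∈ Set.Ioo a b, HasDerivAt f (f' s) s)
    (h2 : ∀ s ∈ Set.Ioo a b, HasDerivAt f' (f'' s) s)
    (hc : ∀ s ∈ Set.Ioo a b, f'' s ≤ c) (s : ℝ) (hs : s ∈ Set.Icc a b) :
    f s - f r - f' r * (s - r) ≤ c / 2 * (s - r) ^ 2 := by
  have hη : AntitoneOn (fun s => f' s - f' r - c * (s - r)) (Set.Ioo a b) := by
    have hd : ∀ s ∈ Set.Ioo a b, HasDerivAt (fun s => f' s - f' r - c * (s - r)) (f'' s - c) s := by
      intro s hs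
      have := ((h2 s hs).sub_const (f' r)).sub (((hasDerivAt_id s).sub_const r).const_mul c)
      rw [mul_one] at this
      exact this
    apply antitoneOn_of_deriv_nonpos (convex_Ioo a b)
    · intro s hs; exact (hd s hs).continuousAt.continuousWithinAt
    · intro s hs; rw [interior_Ioo] at hs; exact (hd s hs).differentiableAt.differentiableWithinAt
    · intro s hs; rw [interior_Ioo] at hs; rw [(hd s hs).deriv]; linarith [hc s hs]
  have hd : ∀ s ∈ Set.Ioo a b,
      HasDerivAt (fun s => f s - f r - f' r * (s - r) - c / 2 * (s - r) ^ 2)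
        (f' s - f' r - c * (s - r)) s := by
    intro s hs
    have := (((h1 s hs).sub_const (f r)).sub
      (((hasDerivAt_id s).sub_const r).const_mul (f' r))).sub
      ((((hasDerivAt_id s).sub_const r).pow 2).const_mul (c / 2))
    refine this.congr_deriv ?_
    simp only [id, Nat.cast_ofNat]; ring
  have hcont : ContinuousOn (fun s => f s - f r - f' r * (s - r) - c / 2 * (s - r) ^ 2)
      (Set.Icc a b) := by
    fun_prop
  have hr0 : r ∈ Set.Ioo a b := ⟨har, hrb⟩
  rcases le_total s r with h | h
  · have hm : MonotoneOn (fun s => f s - f r - f' r * (s - r) - c / 2 * (s - r) ^ 2)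
        (Set.Icc a r) := by
      apply monotoneOn_of_deriv_nonneg (convex_Icc a r)
      · exact hcont.mono (Set.Icc_subset_Icc_right hrb.le)
      · intro u hu; rw [interior_Icc] at hu
        exact (hd u ⟨hu.1, hu.2.trans hrb⟩).differentiableAt.differentiableWithinAt
      · intro u hu; rw [interior_Icc] at hu
        have hu' : u ∈ Set.Ioo a b := ⟨hu.1, hu.2.trans hrb⟩
        rw [(hd u hu').deriv]
        have := hη hu' hr0 hu.2.le
        simp at this; linarith
    have := hm ⟨hs.1, h⟩ ⟨har.le, le_rfl⟩ h
    simp at this; linarith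
  · have hm : AntitoneOn (fun s => f s - f r - f' r * (s - r) - c / 2 * (s - r) ^ 2)
        (Set.Icc r b) := by
      apply antitoneOn_of_deriv_nonpos (convex_Icc r b)
      · exact hcont.mono (Set.Icc_subset_Icc_left har.le)
      · intro u hu; rw [interior_Icc] at hu
        exact (hd u ⟨har.trans hu.1, hu.2⟩).differentiableAt.differentiableWithinAt
      · intro u hu; rw [interior_Icc] at hu
        have hu' : u ∈ Set.Ioo a b := ⟨har.trans hu.1, hu.2⟩
        rw [(hd u hu').deriv]
        have := hη hr0 hu' hu.1.le
        simp at this; linarith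
    have := hm ⟨le_rfl, hrb.le⟩ ⟨h, hs.2⟩ h
    simp at this; linarith

lemma rot_aux {d : ℕ} (ν : Measure (EuclideanSpace ℝ (Fin d)))
    (hrot : ∀ U : EuclideanSpace ℝ (Fin d) ≃ₗᵢ[ℝ] EuclideanSpace ℝ (Fin d),
      ν.map U = ν) (ρ : ℝ) (e e' : EuclideanSpace ℝ (Fin d)) (he : ‖e‖ = 1) (he' : ‖e'‖ = 1) :
    ∫ z in {z | ‖z‖ ≤ ρ}, ⟪e, z⟫ ^ 2 ∂ν = ∫ z in {z | ‖z‖ ≤ ρ}, ⟪e', z⟫ ^ 2 ∂ν := by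
  let U : EuclideanSpace ℝ (Fin d) ≃ₗᵢ[ℝ] EuclideanSpace ℝ (Fin d) :=
    (ℝ ∙ (e' - e))ᗮ.reflection
  have hU : U e' = e := Submodule.reflection_sub (by rw [he, he'])
  have hmp : MeasurePreserving U ν ν := ⟨U.continuous.measurable, hrot U⟩
  have hemb : MeasurableEmbedding U := U.toHomeomorph.measurableEmbedding
  have := hmp.setIntegral_preimage_emb hemb (fun z => ⟪e, z⟫ ^ 2) {z | ‖z‖ ≤ ρ}
  rw [← this]
  have hpre : U ⁻¹' {z | ‖z‖ ≤ ρ} = {z | ‖z‖ ≤ ρ} := by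
    ext z; simp
  rw [hpre]
  congr 1
  ext z
  rw [← hU, U.inner_map_map]

lemma rot_sum {d : ℕ} (ν : Measure (EuclideanSpace ℝ (Fin d)))
    (hrot : ∀ U : EuclideanSpace ℝ (Fin d) ≃ₗᵢ[ℝ] EuclideanSpace ℝ (Fin d),
      ν.map U = ν) (ρ : ℝ) (e : EuclideanSpace ℝ (Fin d)) (he : ‖e‖ = 1)
    (hint : IntegrableOn (fun z => ‖z‖ ^ 2) {z | ‖z‖ ≤ ρ} ν) :
    d * ∫ z in {z | ‖z‖ ≤ ρ}, ⟪e, z⟫ ^ 2 ∂ν = ∫ z in {z | ‖z‖ ≤ ρ}, ‖z‖ ^ 2 ∂ν := by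
  have hB := EuclideanSpace.basisFun (Fin d) ℝ
  have h1 : ∀ z : EuclideanSpace ℝ (Fin d), ‖z‖ ^ 2
      = ∑ i, ⟪EuclideanSpace.basisFun (Fin d) ℝ i, z⟫ ^ 2 := by
    intro z
    rw [← (EuclideanSpace.basisFun (Fin d) ℝ).sum_sq_norm_inner_right z]
    simp
  have h2 : ∀ i, IntegrableOn (fun z => ⟪EuclideanSpace.basisFun (Fin d) ℝ i, z⟫ ^ 2)
      {z | ‖z‖ ≤ ρ} ν := by
    intro i
    refine Integrable.mono' hint ?_ ?_
    · exact (Continuous.aestronglyMeasurable (by fun_prop))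
    · refine Filter.Eventually.of_forall fun z => ?_
      rw [h1 z, Real.norm_of_nonneg (sq_nonneg _)]
      exact Finset.single_le_sum (f := fun i => ⟪EuclideanSpace.basisFun (Fin d) ℝ i, z⟫ ^ 2)
        (fun i _ => sq_nonneg _) (Finset.mem_univ i)
  simp_rw [h1]
  rw [integral_finsetSum _ (fun i _ => h2 i)]
  rw [Finset.sum_congr rfl (fun i _ => rot_aux ν hrot ρ (EuclideanSpace.basisFun (Fin d) ℝ i) e
    ((EuclideanSpace.basisFun (Fin d) ℝ).orthonormal.1 i) he)]
  simp

/-- Lemma 3.2: for a rotationally symmetric Lévy measure `ν`, any drift `b`, a concave-type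
test function `f ∈ C[0,2] ∩ C²(0,2]` with `f(0)=0`, `f' ≥ 0`, `f'' ≤ 0`, `f''`
nondecreasing, and `x ≠ y` with `r := |x-y| ≤ 1`, the coupling-by-reflection integrand is
`ν`-integrable on `{|z| ≤ r/2}`, the second moment `∫_{|z| ≤ r/2} |z|² ν(dz)` is finite,
and `L̃f(|x-y|) ≤ f'(r)⟨b(x)-b(y),x-y⟩/r + (2/d)·f''(2r)·∫_{|z| ≤ r/2} |z|² ν(dz)`. -/
theorem stmt_2 {d : ℕ} (hd : 1 ≤ d) (ν : Measure (EuclideanSpace ℝ (Fin d)))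
    [SigmaFinite ν] (hν0 : ν {0} = 0)
    (hν2 : ∫⁻ z, ENNReal.ofReal (min 1 (‖z‖ ^ 2)) ∂ν < ∞)
    (hrot : ∀ U : EuclideanSpace ℝ (Fin d) ≃ₗᵢ[ℝ] EuclideanSpace ℝ (Fin d),
      ν.map U = ν)
    (b : EuclideanSpace ℝ (Fin d) → EuclideanSpace ℝ (Fin d))
    (f f' f'' : ℝ → ℝ)
    (hf : ContinuousOn f (Set.Icc 0 2))
    (hf' : ∀ s ∈ Set.Ioc (0 : ℝ) 2, HasDerivWithinAt f (f' s) (Set.Ioc 0 2) s)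
    (hf'' : ∀ s ∈ Set.Ioc (0 : ℝ) 2, HasDerivWithinAt f' (f'' s) (Set.Ioc 0 2) s)
    (hf''cont : ContinuousOn f'' (Set.Ioc 0 2))
    (hf0 : f 0 = 0)
    (hf'nonneg : ∀ s ∈ Set.Ioc (0 : ℝ) 2, 0 ≤ f' s)
    (hf''nonpos : ∀ s ∈ Set.Ioc (0 : ℝ) 2, f'' s ≤ 0)
    (hf''mono : MonotoneOn f'' (Set.Ioc 0 2))
    (x y : EuclideanSpace ℝ (Fin d)) (hxy : x ≠ y) (hr : ‖x - y‖ ≤ 1) :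
    IntegrableOn (fun z => f ‖x - y + z - reflect x y z‖ - f ‖x - y‖
        - f' ‖x - y‖ * (⟪x - y, z⟫ / ‖x - y‖) * ind01 ‖z‖
        + f' ‖x - y‖ * (⟪x - y, reflect x y z⟫ / ‖x - y‖) * ind01 ‖reflect x y z‖)
      {z | ‖z‖ ≤ ‖x - y‖ / 2} ν ∧
    (∫⁻ z in {z | ‖z‖ ≤ ‖x - y‖ / 2}, ENNReal.ofReal (‖z‖ ^ 2) ∂ν) < ∞ ∧
    f' ‖x - y‖ * (⟪b x - b y, x - y⟫ / ‖x - y‖)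
        + ∫ z in {z | ‖z‖ ≤ ‖x - y‖ / 2}, (f ‖x - y + z - reflect x y z‖ - f ‖x - y‖
          - f' ‖x - y‖ * (⟪x - y, z⟫ / ‖x - y‖) * ind01 ‖z‖
          + f' ‖x - y‖ * (⟪x - y, reflect x y z⟫ / ‖x - y‖) * ind01 ‖reflect x y z‖) ∂ν
      ≤ f' ‖x - y‖ * (⟪b x - b y, x - y⟫ / ‖x - y‖)
        + (2 / (d : ℝ)) * f'' (2 * ‖x - y‖)
          * ∫ z in {z | ‖z‖ ≤ ‖x - y‖ / 2}, ‖z‖ ^ 2 ∂ν := by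
  set r := ‖x - y‖ with hrdef
  have hr0 : 0 < r := norm_pos_iff.2 (sub_ne_zero.2 hxy)
  set B : Set (EuclideanSpace ℝ (Fin d)) := {z | ‖z‖ ≤ r / 2} with hBdef
  have hBm : MeasurableSet B := measurableSet_le measurable_norm measurable_const
  obtain ⟨e, hedef⟩ : ∃ e : EuclideanSpace ℝ (Fin d), e = r⁻¹ • (x - y) := ⟨_, rfl⟩
  have he : ‖e‖ = 1 := by
    rw [hedef, norm_smul, Real.norm_of_nonneg (by positivity), ← hrdef]
    exact inv_mul_cancel₀ hr0.ne'
  have hxe : x - y = r • e := by rw [hedef, smul_smul, mul_inv_cancel₀ hr0.ne', one_smul]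
  have hle : ∀ z : EuclideanSpace ℝ (Fin d), |⟪e, z⟫| ≤ ‖z‖ := by
    intro z
    simpa [he] using abs_real_inner_le_norm e z
  have hin : ∀ z : EuclideanSpace ℝ (Fin d), ⟪x - y, z⟫ = r * ⟪e, z⟫ := by
    intro z; rw [hxe, real_inner_smul_left]
  have hR : ∀ z : EuclideanSpace ℝ (Fin d), reflect x y z = z - (2 * ⟪e, z⟫) • e := by
    intro z
    unfold reflect
    rw [← hrdef, hin, hxe, smul_smul]
    congr 2
    field_simp
  have hRi : ∀ z : EuclideanSpace ℝ (Fin d), ⟪e, reflect x y z⟫ = -⟪e, z⟫ := by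
    intro z
    rw [hR, inner_sub_right, real_inner_smul_right, real_inner_self_eq_norm_sq, he]; ring
  have hRn : ∀ z : EuclideanSpace ℝ (Fin d), ‖reflect x y z‖ = ‖z‖ := by
    intro z
    have : ‖reflect x y z‖ ^ 2 = ‖z‖ ^ 2 := by
      rw [hR, norm_sub_sq_real, norm_smul, real_inner_smul_right, he, real_inner_comm e z,
        Real.norm_eq_abs, mul_one, sq_abs]
      ring
    exact (pow_left_inj₀ (norm_nonneg _) (norm_nonneg _) two_ne_zero).1 this
  have htB : ∀ z ∈ B, |⟪e, z⟫| ≤ r / 2 := fun z hz => (hle z).trans hz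
  -- the integrand
  have hG : ∀ z ∈ B, f ‖x - y + z - reflect x y z‖ - f r
        - f' r * (⟪x - y, z⟫ / r) * ind01 ‖z‖
        + f' r * (⟪x - y, reflect x y z⟫ / r) * ind01 ‖reflect x y z‖
      = f (r + 2 * ⟪e, z⟫) - f r - f' r * (2 * ⟪e, z⟫) := by
    intro z hz
    have ht := abs_le.1 (htB z hz)
    have h1 : ‖x - y + z - reflect x y z‖ = r + 2 * ⟪e, z⟫ := by
      have : x - y + z - reflect x y z = (r + 2 * ⟪e, z⟫) • e := by
        rw [hR, hxe, add_smul]; abel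
      rw [this, norm_smul, he, mul_one, Real.norm_of_nonneg (by linarith)]
    rw [h1, hin, hin, hRi, hRn, mul_div_cancel_left₀ _ hr0.ne', mul_div_cancel_left₀ _ hr0.ne']
    by_cases hz0 : z = 0
    · subst hz0; simp
    · have : ind01 ‖z‖ = 1 := by
        unfold ind01
        apply Set.indicator_of_mem
        have : ‖z‖ ≤ r / 2 := hz
        exact ⟨norm_pos_iff.2 hz0, by linarith⟩
      rw [this]; ring
  have hd1 : ∀ s ∈ Set.Ioo (0:ℝ) (2 * r), HasDerivAt f (f' s) s := fun s hs =>
    (hf' s ⟨hs.1, by linarith [hs.2]⟩).hasDerivAt (Ioc_mem_nhds hs.1 (by linarith [hs.2]))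
  have hd2 : ∀ s ∈ Set.Ioo (0:ℝ) (2 * r), HasDerivAt f' (f'' s) s := fun s hs =>
    (hf'' s ⟨hs.1, by linarith [hs.2]⟩).hasDerivAt (Ioc_mem_nhds hs.1 (by linarith [hs.2]))
  have hfc : ContinuousOn f (Set.Icc 0 (2 * r)) :=
    hf.mono (Set.Icc_subset_Icc_right (by linarith))
  have hup : ∀ t : ℝ, |t| ≤ r / 2 →
      f (r + 2 * t) - f r - f' r * (2 * t) ≤ 2 * f'' (2 * r) * t ^ 2 := by
    intro t ht
    have ht := abs_le.1 ht
    have := taylor_aux f f' f'' 0 (2 * r) r (f'' (2 * r)) hr0 (by linarith) hfc hd1 hd2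
      (fun s hs => hf''mono ⟨hs.1, by linarith [hs.2]⟩ ⟨by linarith, by linarith⟩ hs.2.le)
      (r + 2 * t) ⟨by linarith, by linarith⟩
    rw [add_sub_cancel_left] at this
    linarith
  have hlow : ∀ t : ℝ, |t| ≤ r / 4 →
      2 * f'' (r / 2) * t ^ 2 ≤ f (r + 2 * t) - f r - f' r * (2 * t) := by
    intro t ht
    have ht := abs_le.1 ht
    have := taylor_aux (fun s => - f s) (fun s => - f' s) (fun s => - f'' s) (r / 2) (2 * r) r
      (- f'' (r / 2)) (by linarith) (by linarith)
      (hfc.mono (Set.Icc_subset_Icc_left (by linarith))).neg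
      (fun s hs => (hd1 s ⟨by linarith [hs.1], hs.2⟩).neg)
      (fun s hs => (hd2 s ⟨by linarith [hs.1], hs.2⟩).neg)
      (fun s hs => neg_le_neg (hf''mono ⟨by linarith, by linarith⟩
        ⟨by linarith [hs.1], by linarith [hs.2]⟩ hs.1.le))
      (r + 2 * t) ⟨by linarith, by linarith⟩
    rw [add_sub_cancel_left] at this
    linarith
  have hbd : ∃ C : ℝ, ∀ t : ℝ, |t| ≤ r / 2 →
      |f (r + 2 * t) - f r - f' r * (2 * t)| ≤ C * t ^ 2 := by
    have hcg : ContinuousOn (fun t : ℝ => f (r + 2 * t) - f r - f' r * (2 * t))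
        (Set.Icc (-(r / 2)) (r / 2)) := by
      have : ContinuousOn (fun t : ℝ => f (r + 2 * t)) (Set.Icc (-(r / 2)) (r / 2)) :=
        hfc.comp (by fun_prop) (fun t ht => ⟨by linarith [ht.1], by linarith [ht.2]⟩)
      exact (this.sub continuousOn_const).sub (by fun_prop)
    obtain ⟨M, hM⟩ := isCompact_Icc.exists_bound_of_continuousOn hcg
    have hM0 : 0 ≤ M := (norm_nonneg _).trans (hM 0 ⟨by linarith, by linarith⟩)
    have hc1 : f'' (r / 2) ≤ 0 := hf''nonpos _ ⟨by linarith, by linarith⟩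
    have hc2 : f'' (2 * r) ≤ 0 := hf''nonpos _ ⟨by linarith, by linarith⟩
    refine ⟨M * 16 / r ^ 2 - 2 * f'' (r / 2), fun t ht => ?_⟩
    have hp : 0 ≤ -(f'' (r / 2)) * t ^ 2 := mul_nonneg (by linarith) (sq_nonneg t)
    have hq : 0 ≤ M * 16 / r ^ 2 * t ^ 2 := by positivity
    rcases le_total |t| (r / 4) with h | h
    · have h1 := hup t ht
      have h2 := hlow t h
      have h3 : f'' (2 * r) * t ^ 2 ≤ 0 := mul_nonpos_of_nonpos_of_nonneg hc2 (sq_nonneg t)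
      rw [abs_le]
      constructor <;> linarith
    · have h1 : |f (r + 2 * t) - f r - f' r * (2 * t)| ≤ M := hM t (abs_le.1 ht)
      have h2 : (r / 4) ^ 2 ≤ t ^ 2 := by
        rw [← sq_abs t]; gcongr
      have h3 : M ≤ M * 16 / r ^ 2 * t ^ 2 := by
        calc M = M * 16 / r ^ 2 * (r / 4) ^ 2 := by field_simp; norm_num
          _ ≤ _ := by gcongr
      linarith
  have hfin : (∫⁻ z in B, ENNReal.ofReal (‖z‖ ^ 2) ∂ν) < ∞ := by
    refine lt_of_le_of_lt ?_ hν2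
    refine le_trans (setLIntegral_mono' hBm (g := fun z => ENNReal.ofReal (min 1 (‖z‖ ^ 2)))
      fun z hz => ?_) (setLIntegral_le_lintegral _ _)
    have hz : ‖z‖ ≤ r / 2 := hz
    rw [min_eq_right]
    nlinarith [norm_nonneg z]
  have hint2 : IntegrableOn (fun z => ‖z‖ ^ 2) B ν := by
    refine ⟨(by fun_prop : Continuous _).aestronglyMeasurable, ?_⟩
    rw [hasFiniteIntegral_iff_ofReal (Filter.Eventually.of_forall fun z => by positivity)]
    exact hfin
  have hinte : IntegrableOn (fun z => ⟪e, z⟫ ^ 2) B ν := by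
    refine Integrable.mono' hint2 (by fun_prop : Continuous _).aestronglyMeasurable ?_
    refine Filter.Eventually.of_forall fun z => ?_
    rw [Real.norm_of_nonneg (sq_nonneg _), ← sq_abs]
    gcongr
    exact hle z
  have hintG : IntegrableOn (fun z => f (r + 2 * ⟪e, z⟫) - f r - f' r * (2 * ⟪e, z⟫)) B ν := by
    obtain ⟨C, hC⟩ := hbd
    refine Integrable.mono' (hinte.const_mul C) ?_ ?_
    · refine ContinuousOn.aestronglyMeasurable ?_ hBm
      have : ContinuousOn (fun z : EuclideanSpace ℝ (Fin d) => f (r + 2 * ⟪e, z⟫)) B :=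
        hfc.comp (by fun_prop) (fun z hz => by
          have := abs_le.1 (htB z hz)
          exact ⟨by linarith, by linarith⟩)
      exact (this.sub continuousOn_const).sub (by fun_prop)
    · exact (ae_restrict_iff' hBm).2 (Filter.Eventually.of_forall fun z hz => hC _ (htB z hz))
  refine ⟨hintG.congr_fun (fun z hz => (hG z hz).symm) hBm, hfin, ?_⟩
  rw [setIntegral_congr_fun hBm hG]
  have hkey : ∫ z in B, (f (r + 2 * ⟪e, z⟫) - f r - f' r * (2 * ⟪e, z⟫)) ∂ν
      ≤ ∫ z in B, 2 * f'' (2 * r) * ⟪e, z⟫ ^ 2 ∂ν :=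
    setIntegral_mono_on hintG (hinte.const_mul _) hBm (fun z hz => hup _ (htB z hz))
  rw [integral_const_mul] at hkey
  have hs := rot_sum ν hrot (r / 2) e he hint2
  have hd0 : (d : ℝ) ≠ 0 := by positivity
  rw [← hs]
  have : 2 / (d : ℝ) * f'' (2 * r) * (d * ∫ z in B, ⟪e, z⟫ ^ 2 ∂ν)
      = 2 * f'' (2 * r) * ∫ z in B, ⟪e, z⟫ ^ 2 ∂ν := by
    field_simp
  rw [this]
  linarith
end

section
/- (Lemma 3.3 of the paper.) Let d ≥ 1, let ν be a Lévy measure on ℝ^d, let b : ℝ^d → ℝ^d be any function, let κ > 0, and let f : ℝ → ℝ be continuous on [0,2κ], twice continuously differentiable on (0,2κ], with f(0) = 0, f' ≥ 0, f'' ≤ 0, and f'' nondecreasing on (0,2κ]. Let x, y ∈ ℝ^d with 0 < |x−y| ≤ κ and write r := |x−y|. Then μ_{x−y}(ℝ^d) and μ_{y−x}(ℝ^d) are finite and equal, and f'(r)·⟨b(x)−b(y), x−y⟩/r − (1/2)·μ_{y−x}(ℝ^d)·f(r) + (1/2)·μ_{x−y}(ℝ^d)·(f(2r) − f(r)) ≤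 f'(r)·⟨b(x)−b(y), x−y⟩/r + (1/2)·μ_{x−y}(ℝ^d)·r²·f''(2r). -/
open MeasureTheory
open scoped RealInnerProductSpace ENNReal

/-- `μ_w = ν ⊓ (δ_w * ν)`, where `δ_w * ν` is the pushforward of `ν` under `z ↦ z + w`. -/
noncomputable def muTrans {d : ℕ} (ν : Measure (EuclideanSpace ℝ (Fin d)))
    (w : EuclideanSpace ℝ (Fin d)) : Measure (EuclideanSpace ℝ (Fin d)) :=
  ν ⊓ ν.map (fun z => z + w)

open MeasureTheory in
lemma muTrans_univ_le {d : ℕ} (ν : Measure (EuclideanSpace ℝ (Fin d)))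
    (w : EuclideanSpace ℝ (Fin d)) :
    (muTrans ν w) Set.univ ≤ (muTrans ν (-w)) Set.univ := by
  have hm : ∀ v : EuclideanSpace ℝ (Fin d), Measurable (fun z => z + v) := fun v => by fun_prop
  have h : (muTrans ν w).map (fun z => z + -w) ≤ muTrans ν (-w) := by
    unfold muTrans
    refine le_inf ?_ ?_
    · refine (Measure.map_mono inf_le_right (hm _)).trans ?_
      rw [Measure.map_map (hm _) (hm _)]
      have : ((fun z : EuclideanSpace ℝ (Fin d) => z + -w) ∘ fun z => z + w) = id := by
        funext z; simp
      rw [this, Measure.map_id]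
    · exact Measure.map_mono inf_le_left (hm _)
  have h2 := h Set.univ
  rwa [Measure.map_apply (hm _) MeasurableSet.univ, Set.preimage_univ] at h2

open MeasureTheory in
lemma muTrans_univ_lt_top {d : ℕ} (ν : Measure (EuclideanSpace ℝ (Fin d)))
    (hν2 : ∫⁻ z, ENNReal.ofReal (min 1 (‖z‖ ^ 2)) ∂ν < ∞)
    (w : EuclideanSpace ℝ (Fin d)) (hw : w ≠ 0) :
    (muTrans ν w) Set.univ < ∞ := by
  have hm : Measurable (fun z : EuclideanSpace ℝ (Fin d) => z + w) := by fun_prop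
  have hw' : 0 < ‖w‖ := norm_pos_iff.mpr hw
  have hA : ν {z | ‖w‖ / 2 ≤ ‖z‖} < ∞ := by
    have hpos : 0 < min 1 ((‖w‖ / 2) ^ 2) := lt_min one_pos (by positivity)
    refine lt_of_le_of_lt (measure_mono ?_) ((meas_ge_le_lintegral_div
      (f := fun z : EuclideanSpace ℝ (Fin d) => ENNReal.ofReal (min 1 (‖z‖ ^ 2))) ?_
      (ε := ENNReal.ofReal (min 1 ((‖w‖ / 2) ^ 2))) ?_ ENNReal.ofReal_ne_top).trans_lt
        (ENNReal.div_lt_top hν2.ne (ENNReal.ofReal_pos.mpr hpos).ne'))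
    · intro z hz
      simp only [Set.mem_setOf_eq] at hz ⊢
      gcongr
    · exact Measurable.aemeasurable (by fun_prop)
    · exact (ENNReal.ofReal_pos.mpr hpos).ne'
  have hB : (ν.map (fun z => z + w)) {z | ‖w‖ / 2 ≤ ‖z‖}ᶜ < ∞ := by
    have hs : MeasurableSet {z : EuclideanSpace ℝ (Fin d) | ‖w‖ / 2 ≤ ‖z‖}ᶜ :=
      (measurableSet_le measurable_const measurable_norm).compl
    rw [Measure.map_apply hm hs]
    refine lt_of_le_of_lt (measure_mono ?_) hA
    intro z hz
    simp only [Set.mem_preimage, Set.mem_compl_iff, Set.mem_setOf_eq, not_le] at hz ⊢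
    have := norm_sub_le (z + w) z
    simp only [add_sub_cancel_left] at this
    linarith
  rw [← Set.union_compl_self {z : EuclideanSpace ℝ (Fin d) | ‖w‖ / 2 ≤ ‖z‖}]
  refine lt_of_le_of_lt (measure_union_le _ _) (ENNReal.add_lt_top.mpr ⟨?_, ?_⟩)
  · exact lt_of_le_of_lt ((inf_le_left : muTrans ν w ≤ ν) _) hA
  · exact lt_of_le_of_lt ((inf_le_right : muTrans ν w ≤ _) _) hB

lemma second_diff {κ r : ℝ} (hr0 : 0 < r) (hr : r ≤ κ) (f f' f'' : ℝ → ℝ)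
    (hf : ContinuousOn f (Set.Icc 0 (2 * κ)))
    (hf' : ∀ s ∈ Set.Ioc (0 : ℝ) (2 * κ), HasDerivWithinAt f (f' s) (Set.Ioc 0 (2 * κ)) s)
    (hf'' : ∀ s ∈ Set.Ioc (0 : ℝ) (2 * κ), HasDerivWithinAt f' (f'' s) (Set.Ioc 0 (2 * κ)) s)
    (hf0 : f 0 = 0)
    (hf''mono : MonotoneOn f'' (Set.Ioc 0 (2 * κ))) :
    f (2 * r) - 2 * f r ≤ r ^ 2 * f'' (2 * r) := by
  set c := f'' (2 * r) with hc
  have hsub : Set.Ioo 0 (2 * r) ⊆ Set.Ioc 0 (2 * κ) := fun s hs => ⟨hs.1, by linarith [hs.2]⟩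
  have hconc : ConcaveOn ℝ (Set.Icc 0 (2 * r)) (fun s => f s - c * s ^ 2 / 2) := by
    refine concaveOn_of_hasDerivWithinAt2_nonpos (convex_Icc _ _)
      (f' := fun s => f' s - c * s) (f'' := fun s => f'' s - c) ?_ ?_ ?_ ?_
    · refine ContinuousOn.sub (hf.mono (Set.Icc_subset_Icc le_rfl (by linarith))) ?_
      fun_prop
    · intro s hs
      rw [interior_Icc] at hs ⊢
      have h2 : HasDerivAt (fun s : ℝ => c * s ^ 2 / 2) (c * s) s := by
        have := ((hasDerivAt_pow 2 s).const_mul c).div_const 2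
        refine HasDerivAt.congr_deriv this ?_
        norm_num
        ring
      exact ((hf' s (hsub hs)).mono hsub).sub h2.hasDerivWithinAt
    · intro s hs
      rw [interior_Icc] at hs ⊢
      have h2 : HasDerivAt (fun s : ℝ => c * s) c s := by
        simpa using (hasDerivAt_id s).const_mul c
      exact ((hf'' s (hsub hs)).mono hsub).sub h2.hasDerivWithinAt
    · intro s hs
      rw [interior_Icc] at hs
      have := hf''mono (hsub hs) (show 2 * r ∈ Set.Ioc 0 (2 * κ) from
        ⟨by linarith, by linarith⟩) hs.2.le
      linarith
  have h := hconc.2 (show (0 : ℝ) ∈ Set.Icc 0 (2 * r) from ⟨le_rfl, by linarith⟩)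
    (show 2 * r ∈ Set.Icc 0 (2 * r) from ⟨by linarith, le_rfl⟩)
    (show (0 : ℝ) ≤ 1 / 2 by norm_num) (show (0 : ℝ) ≤ 1 / 2 by norm_num) (by norm_num)
  have e : (1 / 2 : ℝ) * 0 + 1 / 2 * (2 * r) = r := by ring
  simp only [smul_eq_mul, e, hf0] at h
  nlinarith

/-- Lemma 3.3: for a Lévy measure `ν`, any drift `b`, `κ > 0`, a concave-type test
function `f ∈ C[0,2κ] ∩ C²(0,2κ]` with `f(0)=0`, `f' ≥ 0`, `f'' ≤ 0`, `f''` nondecreasing,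
and `x ≠ y` with `r := |x-y| ≤ κ`: the masses `μ_{x-y}(ℝ^d)` and `μ_{y-x}(ℝ^d)` are finite
and equal, and
`f'(r)⟨b(x)-b(y),x-y⟩/r - ½μ_{y-x}(ℝ^d)f(r) + ½μ_{x-y}(ℝ^d)(f(2r)-f(r))
  ≤ f'(r)⟨b(x)-b(y),x-y⟩/r + ½μ_{x-y}(ℝ^d)·r²·f''(2r)`. -/
theorem stmt_3 {d : ℕ} (hd : 1 ≤ d) (ν : Measure (EuclideanSpace ℝ (Fin d)))
    [SigmaFinite ν] (hν0 : ν {0} = 0)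
    (hν2 : ∫⁻ z, ENNReal.ofReal (min 1 (‖z‖ ^ 2)) ∂ν < ∞)
    (b : EuclideanSpace ℝ (Fin d) → EuclideanSpace ℝ (Fin d))
    (κ : ℝ) (hκ : 0 < κ)
    (f f' f'' : ℝ → ℝ)
    (hf : ContinuousOn f (Set.Icc 0 (2 * κ)))
    (hf' : ∀ s ∈ Set.Ioc (0 : ℝ) (2 * κ), HasDerivWithinAt f (f' s) (Set.Ioc 0 (2 * κ)) s)
    (hf'' : ∀ s ∈ Set.Ioc (0 : ℝ) (2 * κ), HasDerivWithinAt f' (f'' s) (Set.Ioc 0 (2 * κ)) s)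
    (hf''cont : ContinuousOn f'' (Set.Ioc 0 (2 * κ)))
    (hf0 : f 0 = 0)
    (hf'nonneg : ∀ s ∈ Set.Ioc (0 : ℝ) (2 * κ), 0 ≤ f' s)
    (hf''nonpos : ∀ s ∈ Set.Ioc (0 : ℝ) (2 * κ), f'' s ≤ 0)
    (hf''mono : MonotoneOn f'' (Set.Ioc 0 (2 * κ)))
    (x y : EuclideanSpace ℝ (Fin d)) (hxy : x ≠ y) (hr : ‖x - y‖ ≤ κ) :
    (muTrans ν (x - y)) Set.univ < ∞ ∧
    (muTrans ν (y - x)) Set.univ < ∞ ∧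
    (muTrans ν (x - y)) Set.univ = (muTrans ν (y - x)) Set.univ ∧
    f' ‖x - y‖ * (⟪b x - b y, x - y⟫ / ‖x - y‖)
        - (1 / 2) * ((muTrans ν (y - x)) Set.univ).toReal * f ‖x - y‖
        + (1 / 2) * ((muTrans ν (x - y)) Set.univ).toReal
          * (f (2 * ‖x - y‖) - f ‖x - y‖)
      ≤ f' ‖x - y‖ * (⟪b x - b y, x - y⟫ / ‖x - y‖)
        + (1 / 2) * ((muTrans ν (x - y)) Set.univ).toReal * ‖x - y‖ ^ 2
          * f'' (2 * ‖x - y‖) := by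
  have hw : x - y ≠ 0 := sub_ne_zero.mpr hxy
  have h1 := muTrans_univ_lt_top ν hν2 (x - y) hw
  have h2 := muTrans_univ_lt_top ν hν2 (y - x) (sub_ne_zero.mpr hxy.symm)
  have heq : (muTrans ν (x - y)) Set.univ = (muTrans ν (y - x)) Set.univ := by
    refine le_antisymm ?_ ?_
    · simpa using muTrans_univ_le ν (x - y)
    · simpa using muTrans_univ_le ν (y - x)
  refine ⟨h1, h2, heq, ?_⟩
  rw [← heq]
  have h3 := second_diff (norm_pos_iff.mpr hw) hr f f' f'' hf hf' hf'' hf0 hf''mono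
  have h4 := mul_le_mul_of_nonneg_left h3
    (ENNReal.toReal_nonneg (a := (muTrans ν (x - y)) Set.univ))
  linarith
end

section
/- Let d ≥ 1, let ν be a Lévy measure on ℝ^d and let x ∈ ℝ^d with x ≠ 0. Then the measure μ_x = ν ⊓ (δ_x * ν) is finite; more precisely, μ_x(ℝ^d) ≤ 2·ν({z ∈ ℝ^d : |z| ≥ |x|/2}) < ∞. -/
open MeasureTheory
open scoped ENNReal

/-- For a Lévy measure `ν` and `x ≠ 0`, the measure `μ_x = ν ⊓ (δ_x * ν)` is finite:
`μ_x(ℝ^d) ≤ 2·ν({|z| ≥ |x|/2}) < ∞`. -/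
theorem stmt_6 {d : ℕ} (hd : 1 ≤ d) (ν : Measure (EuclideanSpace ℝ (Fin d)))
    [SigmaFinite ν] (hν0 : ν {0} = 0)
    (hν2 : ∫⁻ z, ENNReal.ofReal (min 1 (‖z‖ ^ 2)) ∂ν < ∞)
    (x : EuclideanSpace ℝ (Fin d)) (hx : x ≠ 0) :
    (ν ⊓ ν.map (fun z => z + x)) Set.univ ≤ 2 * ν {z | ‖x‖ / 2 ≤ ‖z‖} ∧
    ν {z | ‖x‖ / 2 ≤ ‖z‖} < ∞ := by
  have hxp : 0 < ‖x‖ := norm_pos_iff.mpr hx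
  have hA : MeasurableSet {z : EuclideanSpace ℝ (Fin d) | ‖x‖ / 2 ≤ ‖z‖} :=
    measurableSet_le measurable_const measurable_norm
  constructor
  · rw [← measure_add_measure_compl hA, two_mul]
    refine add_le_add (Measure.le_iff'.mp inf_le_left _) ?_
    refine (Measure.le_iff'.mp inf_le_right _).trans ?_
    rw [Measure.map_apply (by fun_prop) hA.compl]
    refine measure_mono ?_
    intro z hz
    simp only [Set.mem_preimage, Set.mem_compl_iff, Set.mem_ofPred_eq, not_le] at hz ⊢
    have h := norm_sub_le (z + x) z
    rw [add_sub_cancel_left] at h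
    linarith
  · have hε : ENNReal.ofReal (min 1 ((‖x‖ / 2) ^ 2)) ≠ 0 := by
      rw [Ne, ENNReal.ofReal_eq_zero, not_le]
      positivity
    have hm : Measurable (fun z : EuclideanSpace ℝ (Fin d) =>
        ENNReal.ofReal (min 1 (‖z‖ ^ 2))) := by fun_prop
    refine lt_of_le_of_lt (measure_mono ?_) (lt_of_le_of_lt
      (meas_ge_le_lintegral_div hm.aemeasurable hε ENNReal.ofReal_ne_top)
      (ENNReal.div_lt_top hν2.ne hε))
    intro z hz
    simp only [Set.mem_ofPred_eq] at hz ⊢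
    gcongr
end

section
/- Let d ≥ 1, let ν be a rotationally symmetric Borel measure on ℝ^d with ν({0}) = 0, let x, y ∈ ℝ^d with x ≠ y, and let η ∈ (0, ∞]. Then the Borel measure on ℝ^d × ℝ^d defined by ν̃ := (ν restricted to {z : |z| ≤ η·|x−y|}).map(z ↦ (z, R_{x,y}(z))) + (ν restricted to {z : |z| > η·|x−y|}).map(z ↦ (z,z)) has both marginals equal to ν, i.e. ν̃(A × ℝ^d) = ν(A) and ν̃(ℝ^d × B) = ν(B) for all Borel sets A, B ⊆ ℝ^d. (This says that the coupling-by-reflection jump system defines a coupling operator.) -/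
open MeasureTheory
open scoped RealInnerProductSpace ENNReal

/-- The coupling-by-reflection jump system defines a coupling operator: for a rotationally
symmetric measure `ν` with `ν{0} = 0`, `x ≠ y` and a threshold `η ∈ (0,∞]`, the measure
`ν̃ = (ν|_{|z| ≤ η|x-y|}).map (z ↦ (z, R_{x,y}(z))) + (ν|_{|z| > η|x-y|}).map (z ↦ (z,z))`
on `ℝ^d × ℝ^d` has both marginals equal to `ν`. -/
theorem stmt_7 {d : ℕ} (hd : 1 ≤ d) (ν : Measure (EuclideanSpace ℝ (Fin d)))
    (hν0 : ν {0} = 0)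
    (hrot : ∀ U : EuclideanSpace ℝ (Fin d) ≃ₗᵢ[ℝ] EuclideanSpace ℝ (Fin d),
      ν.map U = ν)
    (x y : EuclideanSpace ℝ (Fin d)) (hxy : x ≠ y) (η : ℝ≥0∞) (hη : 0 < η) :
    ∀ A B : Set (EuclideanSpace ℝ (Fin d)), MeasurableSet A → MeasurableSet B →
      ((ν.restrict {z | (‖z‖₊ : ℝ≥0∞) ≤ η * (‖x - y‖₊ : ℝ≥0∞)}).map
          (fun z => (z, reflect x y z))
        + (ν.restrict {z | η * (‖x - y‖₊ : ℝ≥0∞) < (‖z‖₊ : ℝ≥0∞)}).map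
          (fun z => (z, z)))
        (A ×ˢ Set.univ) = ν A ∧
      ((ν.restrict {z | (‖z‖₊ : ℝ≥0∞) ≤ η * (‖x - y‖₊ : ℝ≥0∞)}).map
          (fun z => (z, reflect x y z))
        + (ν.restrict {z | η * (‖x - y‖₊ : ℝ≥0∞) < (‖z‖₊ : ℝ≥0∞)}).map
          (fun z => (z, z)))
        (Set.univ ×ˢ B) = ν B := by
  have hne : ‖x - y‖ ≠ 0 := norm_ne_zero_iff.mpr (sub_ne_zero.mpr hxy)
  obtain ⟨U, hU⟩ : ∃ U : EuclideanSpace ℝ (Fin d) ≃ₗᵢ[ℝ] EuclideanSpace ℝ (Fin d),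
      ∀ z, U z = reflect x y z := by
    refine ⟨(Submodule.span ℝ {x - y})ᗮ.reflection, fun z => ?_⟩
    rw [Submodule.reflection_orthogonal_apply, Submodule.reflection_singleton_apply]
    simp only [reflect, RCLike.ofReal_real_eq_id, id_eq, neg_sub, add_div,
      two_smul, two_mul, add_smul]
  have hR : reflect x y = U := funext fun z => (hU z).symm
  have hUm : Measurable U := U.continuous.measurable
  have hm : Measurable (reflect x y) := hR ▸ hUm
  have hn : Measurable fun z : EuclideanSpace ℝ (Fin d) => (‖z‖₊ : ℝ≥0∞) :=
    measurable_nnnorm.coe_nnreal_ennreal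
  have hS : MeasurableSet {z : EuclideanSpace ℝ (Fin d) |
      (‖z‖₊ : ℝ≥0∞) ≤ η * (‖x - y‖₊ : ℝ≥0∞)} := hn measurableSet_Iic
  have hc : {z : EuclideanSpace ℝ (Fin d) | η * (‖x - y‖₊ : ℝ≥0∞) < (‖z‖₊ : ℝ≥0∞)}
      = {z : EuclideanSpace ℝ (Fin d) | (‖z‖₊ : ℝ≥0∞) ≤ η * (‖x - y‖₊ : ℝ≥0∞)}ᶜ := by
    ext z; simp
  have hUS : U ⁻¹' {z : EuclideanSpace ℝ (Fin d) |
      (‖z‖₊ : ℝ≥0∞) ≤ η * (‖x - y‖₊ : ℝ≥0∞)} = {z : EuclideanSpace ℝ (Fin d) |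
      (‖z‖₊ : ℝ≥0∞) ≤ η * (‖x - y‖₊ : ℝ≥0∞)} := by
    ext z; simp
  intro A B hA hB
  rw [hc]
  generalize {z : EuclideanSpace ℝ (Fin d) |
      (‖z‖₊ : ℝ≥0∞) ≤ η * (‖x - y‖₊ : ℝ≥0∞)} = S at hS hUS ⊢
  have h1 : Measurable fun z : EuclideanSpace ℝ (Fin d) => (z, reflect x y z) :=
    measurable_id.prodMk hm
  have h2 : Measurable fun z : EuclideanSpace ℝ (Fin d) => (z, z) :=
    measurable_id.prodMk measurable_id
  have key : ν (U ⁻¹' B ∩ S) = ν (B ∩ S) := by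
    conv_rhs => rw [← hrot U, Measure.map_apply hUm (hB.inter hS), Set.preimage_inter, hUS]
  constructor
  · have hAu : MeasurableSet (A ×ˢ (Set.univ : Set (EuclideanSpace ℝ (Fin d)))) :=
      hA.prod MeasurableSet.univ
    rw [Measure.add_apply, Measure.map_apply h1 hAu, Measure.map_apply h2 hAu,
      Set.mk_preimage_prod, Set.mk_preimage_prod]
    simp only [Set.preimage_univ, Set.inter_univ, Set.preimage_id']
    rw [Measure.restrict_apply hA, Measure.restrict_apply hA, ← Set.sdiff_eq]
    exact measure_inter_add_sdiff A hS
  · have hBu : MeasurableSet ((Set.univ : Set (EuclideanSpace ℝ (Fin d))) ×ˢ B) :=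
      MeasurableSet.univ.prod hB
    rw [Measure.add_apply, Measure.map_apply h1 hBu, Measure.map_apply h2 hBu,
      Set.mk_preimage_prod, Set.mk_preimage_prod]
    simp only [Set.preimage_univ, Set.univ_inter, Set.preimage_id', hR]
    rw [Measure.restrict_apply (hUm hB), Measure.restrict_apply hB, ← Set.sdiff_eq, key]
    exact measure_inter_add_sdiff B hS
end

section
/- Let d ≥ 1, let ν be a Lévy measure on ℝ^d, let κ > 0, and let w ∈ ℝ^d with w ≠ 0; set w_κ := min(1, κ/|w|)·w. Then (1/2)·μ_{−w_κ} + (1/2)·μ_{w_κ} ≤ ν, and the Borel measure on ℝ^d × ℝ^d defined by ν̃ := ((1/2)·μ_{−w_κ}).map(z ↦ (z, z + w_κ)) + ((1/2)·μ_{w_κ}).map(z ↦ (z, z − w_κ)) + (ν − (1/2)·μ_{−w_κ} − (1/2)·μ_{w_κ}).map(z ↦ (z,z)) has both marginals equal to ν, i.e. ν̃(A × ℝ^d) = ν(A) and ν̃(ℝ^d × B) = ν(B) for all Borel sets A, B ⊆ ℝ^d. (This says that the refined basic coupling jump system defines a coupling operator.) -/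
open MeasureTheory
open scoped ENNReal

theorem sub_sub_add_cancel_aux {α : Type*} [MeasurableSpace α] (ν a b : Measure α)
    [SigmaFinite ν] (h : a + b ≤ ν) : a + b + (ν - a - b) = ν := by
  refine (Measure.ext_iff_of_iUnion_eq_univ (iUnion_spanningSets ν)).2 fun n => ?_
  have hS := measurableSet_spanningSets ν n
  set S := spanningSets ν n with hSdef
  have hle : a.restrict S + b.restrict S ≤ ν.restrict S := by
    rw [← Measure.restrict_add]; exact Measure.restrict_mono le_rfl h
  have hfin : IsFiniteMeasure (ν.restrict S) :=
    ⟨by simpa using measure_spanningSets_lt_top ν n⟩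
  rw [Measure.restrict_add, Measure.restrict_add,
    Measure.restrict_sub_eq_restrict_sub_restrict hS,
    Measure.restrict_sub_eq_restrict_sub_restrict hS]
  generalize ν.restrict S = ν' at *
  generalize a.restrict S = a' at *
  generalize b.restrict S = b' at *
  have ha : a' ≤ ν' := le_trans (Measure.le_add_right le_rfl) hle
  have hb : b' ≤ ν' := le_trans (Measure.le_add_left le_rfl) hle
  have : IsFiniteMeasure a' := isFiniteMeasure_of_le ν' ha
  have : IsFiniteMeasure b' := isFiniteMeasure_of_le ν' hb
  have hb2 : b' ≤ ν' - a' := by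
    refine Measure.le_iff.2 fun s hs => ?_
    rw [Measure.sub_apply hs ha]
    have := hle s
    rw [Measure.add_apply] at this
    exact ENNReal.le_sub_of_add_le_left (measure_ne_top a' s) this
  rw [add_assoc, add_comm b', Measure.sub_add_cancel_of_le hb2, add_comm,
    Measure.sub_add_cancel_of_le ha]

theorem muTrans_map_le {d : ℕ} (ν : Measure (EuclideanSpace ℝ (Fin d)))
    (v : EuclideanSpace ℝ (Fin d)) :
    (muTrans ν (-v)).map (fun z => z + v) ≤ muTrans ν v := by
  have hm : ∀ u : EuclideanSpace ℝ (Fin d), Measurable (fun z => z + u) :=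
    fun u => measurable_id.add_const u
  unfold muTrans
  refine le_inf ?_ (Measure.map_mono inf_le_left (hm v))
  refine (Measure.map_mono inf_le_right (hm v)).trans ?_
  rw [Measure.map_map (hm _) (hm _)]
  have : ((fun z => z + v) ∘ fun z => z + -v) = id := by ext z; simp
  rw [this, Measure.map_id]

theorem muTrans_map {d : ℕ} (ν : Measure (EuclideanSpace ℝ (Fin d)))
    (v : EuclideanSpace ℝ (Fin d)) :
    (muTrans ν (-v)).map (fun z => z + v) = muTrans ν v := by
  have hm : ∀ u : EuclideanSpace ℝ (Fin d), Measurable (fun z => z + u) :=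
    fun u => measurable_id.add_const u
  refine le_antisymm (muTrans_map_le ν v) ?_
  have h := Measure.map_mono (muTrans_map_le ν (-v)) (hm v)
  rw [Measure.map_map (hm _) (hm _), neg_neg] at h
  have : ((fun z => z + v) ∘ fun z => z + -v) = id := by ext z; simp
  rwa [this, Measure.map_id] at h

/-- The refined basic coupling jump system defines a coupling operator: for a Lévy measure
`ν`, `κ > 0`, `w ≠ 0` and `w_κ = min(1, κ/|w|)·w`, one has
`(1/2)μ_{-w_κ} + (1/2)μ_{w_κ} ≤ ν` and the measure
`ν̃ = ((1/2)μ_{-w_κ}).map (z ↦ (z, z+w_κ)) + ((1/2)μ_{w_κ}).map (z ↦ (z, z-w_κ))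
  + (ν - (1/2)μ_{-w_κ} - (1/2)μ_{w_κ}).map (z ↦ (z,z))`
has both marginals equal to `ν`. -/
theorem stmt_8 {d : ℕ} (hd : 1 ≤ d) (ν : Measure (EuclideanSpace ℝ (Fin d)))
    [SigmaFinite ν] (hν0 : ν {0} = 0)
    (hν2 : ∫⁻ z, ENNReal.ofReal (min 1 (‖z‖ ^ 2)) ∂ν < ∞)
    (κ : ℝ) (hκ : 0 < κ) (w : EuclideanSpace ℝ (Fin d)) (hw : w ≠ 0) :
    ((1 / 2 : ℝ≥0∞) • muTrans ν (-(min 1 (κ / ‖w‖) • w))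
        + (1 / 2 : ℝ≥0∞) • muTrans ν (min 1 (κ / ‖w‖) • w) ≤ ν) ∧
    ∀ A B : Set (EuclideanSpace ℝ (Fin d)), MeasurableSet A → MeasurableSet B →
      (((1 / 2 : ℝ≥0∞) • muTrans ν (-(min 1 (κ / ‖w‖) • w))).map
          (fun z => (z, z + min 1 (κ / ‖w‖) • w))
        + ((1 / 2 : ℝ≥0∞) • muTrans ν (min 1 (κ / ‖w‖) • w)).map
          (fun z => (z, z - min 1 (κ / ‖w‖) • w))
        + (ν - (1 / 2 : ℝ≥0∞) • muTrans ν (-(min 1 (κ / ‖w‖) • w))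
            - (1 / 2 : ℝ≥0∞) • muTrans ν (min 1 (κ / ‖w‖) • w)).map
          (fun z => (z, z)))
        (A ×ˢ Set.univ) = ν A ∧
      (((1 / 2 : ℝ≥0∞) • muTrans ν (-(min 1 (κ / ‖w‖) • w))).map
          (fun z => (z, z + min 1 (κ / ‖w‖) • w))
        + ((1 / 2 : ℝ≥0∞) • muTrans ν (min 1 (κ / ‖w‖) • w)).map
          (fun z => (z, z - min 1 (κ / ‖w‖) • w))
        + (ν - (1 / 2 : ℝ≥0∞) • muTrans ν (-(min 1 (κ / ‖w‖) • w))
            - (1 / 2 : ℝ≥0∞) • muTrans ν (min 1 (κ / ‖w‖) • w)).map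
          (fun z => (z, z)))
        (Set.univ ×ˢ B) = ν B := by
  generalize min 1 (κ / ‖w‖) • w = v
  have hle : (1 / 2 : ℝ≥0∞) • muTrans ν (-v) + (1 / 2 : ℝ≥0∞) • muTrans ν v ≤ ν := by
    have h1 : ∀ u, muTrans ν u ≤ ν := fun u => inf_le_left
    refine Measure.le_iff.2 fun s _ => ?_
    simp only [Measure.add_apply, Measure.smul_apply, smul_eq_mul]
    calc _ ≤ (1 / 2 : ℝ≥0∞) * ν s + (1 / 2 : ℝ≥0∞) * ν s := by
          gcongr
          · exact h1 _
          · exact h1 _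
      _ = ν s := by rw [← add_mul, ENNReal.add_halves, one_mul]
  refine ⟨hle, fun A B hA hB => ?_⟩
  have key := sub_sub_add_cancel_aux ν _ _ hle
  have e1 : ((1 / 2 : ℝ≥0∞) • muTrans ν (-v)).map (fun z => z + v)
      = (1 / 2 : ℝ≥0∞) • muTrans ν v := by rw [Measure.map_smul, muTrans_map]
  have e2 : ((1 / 2 : ℝ≥0∞) • muTrans ν v).map (fun z => z - v)
      = (1 / 2 : ℝ≥0∞) • muTrans ν (-v) := by
    have := muTrans_map ν (-v)
    simp only [neg_neg, ← sub_eq_add_neg] at this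
    rw [Measure.map_smul, this]
  generalize (1 / 2 : ℝ≥0∞) • muTrans ν (-v) = a at *
  generalize (1 / 2 : ℝ≥0∞) • muTrans ν v = b at *
  have m1 : Measurable (fun z : EuclideanSpace ℝ (Fin d) => z + v) :=
    measurable_id.add_const v
  have m2 : Measurable (fun z : EuclideanSpace ℝ (Fin d) => z - v) :=
    measurable_id.sub_const v
  have p1 : Measurable (fun z : EuclideanSpace ℝ (Fin d) => (z, z + v)) :=
    measurable_id.prodMk m1
  have p2 : Measurable (fun z : EuclideanSpace ℝ (Fin d) => (z, z - v)) :=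
    measurable_id.prodMk m2
  have p3 : Measurable (fun z : EuclideanSpace ℝ (Fin d) => (z, z)) :=
    measurable_id.prodMk measurable_id
  have hAm : MeasurableSet (A ×ˢ (Set.univ : Set (EuclideanSpace ℝ (Fin d)))) :=
    hA.prod MeasurableSet.univ
  have hBm : MeasurableSet ((Set.univ : Set (EuclideanSpace ℝ (Fin d))) ×ˢ B) :=
    MeasurableSet.univ.prod hB
  have kA := congrArg (fun m => m A) key
  have kB := congrArg (fun m => m B) key
  have e1B := congrArg (fun m => m B) e1
  have e2B := congrArg (fun m => m B) e2
  simp only [Measure.add_apply] at kA kB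
  simp only [Measure.map_apply m1 hB, Measure.map_apply m2 hB] at e1B e2B
  constructor
  · rw [Measure.add_apply, Measure.add_apply, Measure.map_apply p1 hAm,
      Measure.map_apply p2 hAm, Measure.map_apply p3 hAm]
    simpa [Set.mk_preimage_prod] using kA
  · rw [Measure.add_apply, Measure.add_apply, Measure.map_apply p1 hBm,
      Measure.map_apply p2 hBm, Measure.map_apply p3 hBm]
    simp only [Set.mk_preimage_prod, Set.preimage_univ, Set.univ_inter]
    rw [e1B, e2B, add_comm (b B)]
    exact kB
end

section
/- Let d ≥ 1, let x, y ∈ ℝ^d with x ≠ y, let q₀ : [0, ∞) → [0, ∞) be Borel measurable, and set m(z) := min(q₀(|z|), q₀(|z + x − y|)) for z ∈ ℝ^d. Assume ∫_{{z : |z| ≤ 1 + |x−y|}} m(z) dz < ∞ (Lebesgue measure). Then ∫_{ℝ^d} (⟨x−y, z + (x−y)⟩/|x−y|)·1_{(0,1)}(|z + (x−y)|)·m(z) dz = ∫_{ℝ^d} (⟨x−y, R_{x,y}(z)⟩/|x−y|)·1_{(0,1)}(|z|)·m(z) dz. -/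
open MeasureTheory
open scoped RealInnerProductSpace

/-- The change-of-variables identity used for the combined reflection/basic coupling:
with `m(z) = min(q₀(|z|), q₀(|z+x-y|))` integrable on `{|z| ≤ 1 + |x-y|}`,
`∫ ⟨x-y, z+(x-y)⟩/|x-y| · 1_{(0,1)}(|z+(x-y)|) m(z) dz
  = ∫ ⟨x-y, R_{x,y}(z)⟩/|x-y| · 1_{(0,1)}(|z|) m(z) dz`. -/
theorem stmt_16 {d : ℕ} (hd : 1 ≤ d)
    (x y : EuclideanSpace ℝ (Fin d)) (hxy : x ≠ y)
    (q₀ : ℝ → ℝ) (hq : Measurable q₀) (hq0 : ∀ t : ℝ, 0 ≤ t → 0 ≤ q₀ t)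
    (hint : IntegrableOn (fun z => min (q₀ ‖z‖) (q₀ ‖z + x - y‖))
      {z | ‖z‖ ≤ 1 + ‖x - y‖} volume) :
    ∫ z, (⟪x - y, z + (x - y)⟫ / ‖x - y‖) * ind01 ‖z + (x - y)‖
        * min (q₀ ‖z‖) (q₀ ‖z + x - y‖)
      = ∫ z, (⟪x - y, reflect x y z⟫ / ‖x - y‖) * ind01 ‖z‖
        * min (q₀ ‖z‖) (q₀ ‖z + x - y‖) := by
  rw [← integral_sub_left_eq_self _ volume (-(x - y))]
  have hne : ‖x - y‖ ≠ 0 := norm_ne_zero_iff.mpr (sub_ne_zero.mpr hxy)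
  refine integral_congr_ae (Filter.Eventually.of_forall fun w => ?_)
  have h1 : -(x - y) - w + (x - y) = -w := by abel
  have h2 : -(x - y) - w + x - y = -w := by abel
  have h3 : -(x - y) - w = -(w + x - y) := by abel
  have h4 : ⟪x - y, reflect x y w⟫ = ⟪x - y, -w⟫ := by
    unfold reflect
    rw [inner_sub_right, inner_smul_right, real_inner_self_eq_norm_sq, inner_neg_right]
    field_simp
    ring
  beta_reduce
  rw [h1, h2, h3, h4, norm_neg, norm_neg, min_comm]
end
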